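/- arXiv:cs/0111056 — 3 statements merged into one kernel-verified Lean document; each statement's English description precedes it below -/
import Mathlib

section
/- The Vernam one-time pad provides perfect secrecy: let n ≥ 1, let P = C = K = {0,1}^n (length-n bit strings, i.e., functions Fin n → ZMod 2), let the encryption functions be E_k(p) = p ⊕ k (componentwise addition modulo 2), let Pr_K be the uniform distribution on K, and let Pr_P be an arbitrary probability distribution on P. Then for all p ∈ P and c ∈ C, Pr(p,c) = Pr_P(p)·Pr(c), i.e., the system provides perfect secrecy. -/
/-! Once the plaintext `p` is fixed, encryption is a channel: the random key sends `p` to `c` with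
some transition probability. Perfect secrecy holds as soon as this probability does not depend on
`p`, since the ciphertext distribution is its average over the plaintexts. For the one-time pad
exactly one key sends `p` to `c`, and all keys are equally likely. -/

section Cryptosystem

variable {P C K R : Type*} [Fintype K] [DecidableEq C] [Semiring R]

/-- The joint probability of the plaintext `p` and the ciphertext `c` in the cryptosystem with
encryption functions `E k`, for a plaintext distribution `PrP` and an independent key distribution
`PrK`, both encoded as weight functions with values in a semiring. -/
def jointProb (E : K → P → C) (PrP : P → R) (PrK : K → R) (p : P) (c : C) : R :=
  ∑ k, if E k p = c then PrP p * PrK k else 0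

/-- The probability that the ciphertext `c` occurs. -/
def cipherProb [Fintype P] (E : K → P → C) (PrP : P → R) (PrK : K → R) (c : C) : R :=
  ∑ p, jointProb E PrP PrK p c

/-- Perfect secrecy: plaintext and ciphertext are independent. -/
def PerfectSecrecy [Fintype P] (E : K → P → C) (PrP : P → R) (PrK : K → R) : Prop :=
  ∀ p c, jointProb E PrP PrK p c = PrP p * cipherProb E PrP PrK c

/-- The probability that a random key encrypts `p` to `c`. Unlike the conditional probability of
`c` given `p`, it is meaningful also for plaintexts of probability zero. -/
def transitionProb (E : K → P → C) (PrK : K → R) (p : P) (c : C) : R :=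
  ∑ k, if E k p = c then PrK k else 0

theorem jointProb_eq_mul_transitionProb (E : K → P → C) (PrP : P → R) (PrK : K → R)
    (p : P) (c : C) :
    jointProb E PrP PrK p c = PrP p * transitionProb E PrK p c := by
  simp only [jointProb, transitionProb, Finset.mul_sum, mul_ite, mul_zero]

theorem transitionProb_eq_of_bijective {E : K → P → C} {PrK : K → R} {q : R} {p : P}
    (hE : Function.Bijective fun k => E k p) (hK : ∀ k, PrK k = q) (c : C) :
    transitionProb E PrK p c = q := by
  classical
  obtain ⟨k₀, hk₀⟩ := hE.surjective c
  have encrypts_iff (k : K) : E k p = c ↔ k = k₀ := by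
    rw [← hk₀]
    exact hE.injective.eq_iff
  simp only [transitionProb, encrypts_iff, hK, Finset.sum_ite_eq', Finset.mem_univ, if_true]

variable [Fintype P] {E : K → P → C} {PrP : P → R} {PrK : K → R}

theorem perfectSecrecy_of_transitionProb_eq (hP : ∑ p, PrP p = 1)
    (hE : ∀ p p' c, transitionProb E PrK p c = transitionProb E PrK p' c) :
    PerfectSecrecy E PrP PrK := by
  intro p c
  have cipherProb_eq : cipherProb E PrP PrK c = transitionProb E PrK p c :=
    calc
      cipherProb E PrP PrK c = ∑ p', PrP p' * transitionProb E PrK p' c :=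
        Finset.sum_congr rfl fun p' _ => jointProb_eq_mul_transitionProb E PrP PrK p' c
      _ = ∑ p', PrP p' * transitionProb E PrK p c :=
        Finset.sum_congr rfl fun p' _ => by rw [hE p' p c]
      _ = transitionProb E PrK p c := by rw [← Finset.sum_mul, hP, one_mul]
  rw [cipherProb_eq, jointProb_eq_mul_transitionProb]

theorem perfectSecrecy_of_bijective {q : R} (hP : ∑ p, PrP p = 1)
    (hE : ∀ p, Function.Bijective fun k => E k p) (hK : ∀ k, PrK k = q) :
    PerfectSecrecy E PrP PrK :=
  perfectSecrecy_of_transitionProb_eq hP fun p p' c =>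
    (transitionProb_eq_of_bijective (hE p) hK c).trans
      (transitionProb_eq_of_bijective (hE p') hK c).symm

end Cryptosystem

theorem vernam_perfect_secrecy_general {G R : Type*} [AddGroup G] [Fintype G] [DecidableEq G]
    [Semiring R] {PrP PrK : G → R} {q : R} (hP : ∑ p, PrP p = 1) (hK : ∀ k, PrK k = q) :
    PerfectSecrecy (fun k p : G => p + k) PrP PrK :=
  perfectSecrecy_of_bijective hP AddGroup.addLeft_bijective hK

/-- The Vernam one-time pad provides perfect secrecy. -/
theorem vernam_perfect_secrecy (n : ℕ) (hn : 1 ≤ n)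
    (PrP : (Fin n → ZMod 2) → ℝ)
    (hPnonneg : ∀ p : Fin n → ZMod 2, 0 ≤ PrP p)
    (hPsum : ∑ p : Fin n → ZMod 2, PrP p = 1)
    (PrK : (Fin n → ZMod 2) → ℝ)
    (hKuniform : ∀ k : Fin n → ZMod 2,
      PrK k = 1 / (Fintype.card (Fin n → ZMod 2) : ℝ)) :
    ∀ (p c : Fin n → ZMod 2),
      (∑ k : Fin n → ZMod 2, if p + k = c then PrP p * PrK k else 0)
        = PrP p *
          (∑ p' : Fin n → ZMod 2, ∑ k : Fin n → ZMod 2,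
            if p' + k = c then PrP p' * PrK k else 0) :=
  vernam_perfect_secrecy_general hPsum hKuniform
end

section
/- Wiener's approximation inequality: let p and q be primes with q < p < 2q, let n = p·q and φ(n) = (p−1)·(q−1). Let e, d, k be positive integers with e·d = 1 + k·φ(n) and e < φ(n), and suppose d is small in the sense that (3·d : ℝ) < n^{1/4} (equivalently, 81·d⁴ < n). Then k < d, and the fraction k/d approximates e/n so well that |e/n − k/d| < 1/(2·d²) as real numbers. -/
/-!
The key equation `e d = 1 + k φ` gives `k φ < e d ≤ φ d`, so `k < d`, and it also gives
`k / d - e / n = (k s - 1) / (d n)` with `s = n - φ = p + q - 1`. It is therefore enough that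
`2 d² s ≤ n`. When neither factor exceeds twice the other, `(2 q - p) (2 p - q) ≥ 0`, which
rearranges to `2 (p + q)² ≤ 9 n`; hence `s` is at most `(3 / √2) √n`, and `18 d⁴ ≤ n` suffices.
-/

theorem lt_of_mul_eq_one_add_mul {R : Type*} [CommSemiring R] [LinearOrder R]
    [IsStrictOrderedRing R] {e d k φ : R} (hd : 0 ≤ d) (hφ : 0 ≤ φ)
    (hed : e * d = 1 + k * φ) (heφ : e ≤ φ) : k < d := by
  refine lt_of_mul_lt_mul_right ?_ hφ
  calc k * φ < 1 + k * φ := lt_one_add _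
    _ = e * d := hed.symm
    _ ≤ φ * d := mul_le_mul_of_nonneg_right heφ hd
    _ = d * φ := mul_comm φ d

section OrderedRing

variable {R : Type*} [CommRing R] [LinearOrder R] [IsStrictOrderedRing R]

theorem two_mul_add_sq_le_nine_mul {p q : R} (hpq : p ≤ 2 * q) (hqp : q ≤ 2 * p) :
    2 * (p + q) ^ 2 ≤ 9 * (p * q) := by
  have hfactors : 0 ≤ (2 * q - p) * (2 * p - q) :=
    mul_nonneg (sub_nonneg.2 hpq) (sub_nonneg.2 hqp)
  linarith

theorem two_mul_sq_mul_add_le_mul {p q d : R} (hpq : p ≤ 2 * q) (hqp : q ≤ 2 * p)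
    (hsmall : 18 * d ^ 4 ≤ p * q) : 2 * d ^ 2 * (p + q) ≤ p * q := by
  have hn : 0 ≤ p * q := le_trans (by positivity) hsmall
  refine le_of_sq_le_sq ?_ hn
  calc (2 * d ^ 2 * (p + q)) ^ 2 = 2 * d ^ 4 * (2 * (p + q) ^ 2) := by ring
    _ ≤ 2 * d ^ 4 * (9 * (p * q)) :=
      mul_le_mul_of_nonneg_left (two_mul_add_sq_le_nine_mul hpq hqp) (by positivity)
    _ = 18 * d ^ 4 * (p * q) := by ring
    _ ≤ p * q * (p * q) := mul_le_mul_of_nonneg_right hsmall hn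
    _ = (p * q) ^ 2 := (sq _).symm

end OrderedRing

theorem div_sub_div_of_mul_eq_one_add_mul {K : Type*} [Field K] {e d k n φ : K}
    (hd : d ≠ 0) (hn : n ≠ 0) (hed : e * d = 1 + k * φ) :
    k / d - e / n = (k * (n - φ) - 1) / (d * n) := by
  rw [div_sub_div _ _ hd hn]
  congr 1
  linear_combination -hed

theorem abs_div_sub_div_lt_of_mul_eq_one_add_mul {K : Type*} [Field K] [LinearOrder K]
    [IsStrictOrderedRing K] {e d k n φ : K} (hd : 0 < d) (hn : 0 < n)
    (hed : e * d = 1 + k * φ) (hone : 1 ≤ k * (n - φ)) (hle : 2 * d * (k * (n - φ)) ≤ n) :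
    |e / n - k / d| < 1 / (2 * d ^ 2) := by
  rw [abs_sub_comm, div_sub_div_of_mul_eq_one_add_mul hd.ne' hn.ne' hed,
    abs_of_nonneg (div_nonneg (sub_nonneg.2 hone) (by positivity)),
    div_lt_div_iff₀ (by positivity) (by positivity)]
  calc (k * (n - φ) - 1) * (2 * d ^ 2) = d * (2 * d * (k * (n - φ)) - 2 * d) := by ring
    _ < d * n := by gcongr; linarith
    _ = 1 * (d * n) := (one_mul _).symm

theorem wiener_attack_general {p q n φ e d k : ℕ} (hpq : p ≤ 2 * q) (hqp : q ≤ 2 * p)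
    (hn : n = p * q) (hφ : φ = (p - 1) * (q - 1)) (hk : 0 < k)
    (hed : e * d = 1 + k * φ) (heφ : e < φ) (hsmall : 18 * d ^ 4 ≤ n) :
    k < d ∧ |(e : ℝ) / (n : ℝ) - (k : ℝ) / (d : ℝ)| < 1 / (2 * (d : ℝ) ^ 2) := by
  have hkd : k < d := lt_of_mul_eq_one_add_mul d.zero_le φ.zero_le hed heφ.le
  have hd : 0 < d := hk.trans hkd
  have hφ_pos : 0 < (p - 1) * (q - 1) := hφ ▸ e.zero_le.trans_lt heφ
  have hp : 1 ≤ p := (Nat.sub_pos_iff_lt.1 (Nat.pos_of_mul_pos_right hφ_pos)).le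
  have hq : 1 ≤ q := (Nat.sub_pos_iff_lt.1 (Nat.pos_of_mul_pos_left hφ_pos)).le
  have hs : (n : ℝ) - φ = p + q - 1 := by
    rw [hn, hφ]
    push_cast [hp, hq]
    ring
  have hs_one : (1 : ℝ) ≤ n - φ := by
    rw [hs, le_sub_iff_add_le]
    exact_mod_cast add_le_add hp hq
  refine ⟨hkd, abs_div_sub_div_lt_of_mul_eq_one_add_mul (φ := (φ : ℝ)) (mod_cast hd)
    (mod_cast hn ▸ Nat.mul_pos hp hq) (mod_cast hed) ?_ ?_⟩
  · exact one_le_mul_of_one_le_of_one_le (mod_cast hk) hs_one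
  · calc 2 * (d : ℝ) * (k * (n - φ)) ≤ 2 * d * (d * (p + q)) := by
          gcongr
          exact hs.trans_le (sub_le_self _ zero_le_one)
      _ = 2 * (d : ℝ) ^ 2 * (p + q) := by ring
      _ ≤ p * q := two_mul_sq_mul_add_le_mul (mod_cast hpq) (mod_cast hqp) (mod_cast hn ▸ hsmall)
      _ = n := mod_cast hn.symm

/-- Wiener's approximation inequality: if the RSA private exponent `d` is
small (`81 * d⁴ < n`), then `k < d` and `k/d` approximates `e/n` within
`1/(2d²)`. -/
theorem wiener_attack (p q : ℕ) (hp : p.Prime) (hq : q.Prime)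
    (hqp : q < p) (hp2q : p < 2 * q)
    (n : ℕ) (hn : n = p * q) (φ : ℕ) (hφ : φ = (p - 1) * (q - 1))
    (e d k : ℕ) (he : 0 < e) (hd : 0 < d) (hk : 0 < k)
    (hed : e * d = 1 + k * φ) (heφ : e < φ)
    (hsmall : 81 * d ^ 4 < n) :
    k < d ∧ |(e : ℝ) / (n : ℝ) - (k : ℝ) / (d : ℝ)| < 1 / (2 * (d : ℝ) ^ 2) :=
  wiener_attack_general hp2q.le (by omega) hn hφ hk hed heφ (by omega)
end

section
/- Soundness of the Goldreich–Micali–Wigderson protocol for graph non-isomorphism: let n be a positive natural number and let G₁ and G₂ be isomorphic simple graphs on the vertex set Fin n. Then for every function f from simple graphs on Fin n to {1, 2} (a prover's answering strategy), the number of pairs (π, b), where π is a permutation of Fin n and b ∈ {1, 2}, such that f(π·G_b) = b is exactly n! (the number of permutations of Fin n); i.e., when π and b are chosen uniformly at random, any prover answers correctly with probability exactly 1/2. -/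
/-!
If all the graphs `G b` are relabelings `g b • H` of one graph `H`, the challenge `π • G b` equals
`ρ • H` with `ρ = π * g b`. When the answer is correct, `b` is read off `ρ` as `f (ρ • H)`, and then
`π` is `ρ / g b`. So `(π, b) ↦ ρ` is a bijection from the winning pairs onto all permutations. It
only uses that the graphs lie in one orbit of a group action.
-/

/-- The image of a simple graph `G` on `Fin n` under a permutation `π`. -/
def permGraph {n : ℕ} (π : Equiv.Perm (Fin n)) (G : SimpleGraph (Fin n)) :
    SimpleGraph (Fin n) :=
  G.map π.toEmbedding

open Equiv MulAction

/-- The pairs `(m, b)` for which the guess `F (m * g b)` of `b` is correct correspond to the group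
elements `m * g b`. In the protocol, `g b` relabels a reference graph into the `b`-th one, and
`F` is the prover's answer as a function of the total relabeling of the reference graph. -/
def correctGuessEquiv {M ι : Type*} [Group M] (g : ι → M) (F : M → ι) :
    {p : M × ι // F (p.1 * g p.2) = p.2} ≃ M where
  toFun p := p.1.1 * g p.1.2
  invFun m := ⟨(m / g (F m), F m), by simp only [div_mul_cancel]⟩
  left_inv := by
    rintro ⟨⟨m, b⟩, hb : F (m * g b) = b⟩
    simp only [hb, mul_div_cancel_right]
  right_inv m := div_mul_cancel m (g (F m))

theorem card_correct_guess_of_mem_orbit {M X ι : Type*} [Group M] [MulAction M X] {x₀ : X}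
    {x : ι → X} (hx : ∀ b, x b ∈ orbit M x₀) (f : X → ι) :
    Nat.card {p : M × ι // f (p.1 • x p.2) = p.2} = Nat.card M := by
  choose g hg using hx
  simpa only [mul_smul, hg] using Nat.card_congr (correctGuessEquiv g fun m ↦ f (m • x₀))

/-- The relabeling action of the permutations of `V` on the simple graphs with vertex set `V`;
the orbits are the isomorphism classes. -/
instance permActionSimpleGraph {V : Type*} : MulAction (Perm V) (SimpleGraph V) where
  smul π G := G.map π.toEmbedding
  one_smul G := G.map_id
  mul_smul π σ G := (G.map_map σ.toEmbedding π.toEmbedding).symm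

theorem mem_orbit_perm_of_iso {V : Type*} {G H : SimpleGraph V} (e : H ≃g G) :
    G ∈ orbit (Perm V) H := by
  refine ⟨e.toEquiv, ?_⟩
  change H.map e.toEquiv.toEmbedding = G
  rw [← SimpleGraph.comap_symm]
  ext u v
  exact e.symm.map_adj_iff

theorem gmw_non_isomorphism_soundness_general {V ι : Type*} [Finite V] {H : SimpleGraph V}
    {G : ι → SimpleGraph V} (hG : ∀ b, Nonempty (H ≃g G b)) (f : SimpleGraph V → ι) :
    Nat.card {p : Perm V × ι // f ((G p.2).map p.1.toEmbedding) = p.2} =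
      (Nat.card V).factorial :=
  (card_correct_guess_of_mem_orbit (fun b ↦ (hG b).elim mem_orbit_perm_of_iso) f).trans
    Nat.card_perm

/-- Soundness of the Goldreich–Micali–Wigderson protocol for graph
non-isomorphism: if `G₁` and `G₂` are isomorphic, then for every prover
strategy `f`, out of all `2 * n!` pairs `(π, b)` of a permutation `π` and a
bit `b`, exactly `n!` lead to the correct answer `f (π • G_b) = b`; i.e.,
the prover answers correctly with probability exactly `1/2`. -/
theorem gmw_non_isomorphism_soundness (n : ℕ) (hn : 0 < n)
    (G₁ G₂ : SimpleGraph (Fin n))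
    (hiso : ∃ σ : Equiv.Perm (Fin n), permGraph σ G₁ = G₂) :
    ∀ f : SimpleGraph (Fin n) → Fin 2,
      Nat.card {x : Equiv.Perm (Fin n) × Fin 2 //
          f (permGraph x.1 (![G₁, G₂] x.2)) = x.2}
        = Nat.factorial n := by
  obtain ⟨σ, rfl⟩ := hiso
  have hG : ∀ b, Nonempty (G₁ ≃g ![G₁, permGraph σ G₁] b) :=
    Fin.forall_fin_two.2 ⟨⟨.refl⟩, ⟨.map σ G₁⟩⟩
  simpa only [permGraph, Nat.card_fin] using gmw_non_isomorphism_soundness_general hG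
end
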